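/- arXiv:1410.8229 — 2 statements merged into one kernel-verified Lean document; each statement's English description precedes it below -/
import Mathlib

section
/- Let m, n, k be positive integers, A ∈ ℝ^{m×n}, and μ ∈ (0,1). Suppose that for every k-sparse x ∈ ℝⁿ and every z ∈ ℝⁿ with Az = Ax, one has μ‖x‖₁ + (1−μ)‖x‖₂² ≤ μ‖z‖₁ + (1−μ)‖z‖₂². Then every h in the null space of A satisfies ‖h‖₂ ≤ 2·σ_k(h, ‖·‖₂). -/
/-- The ℓ¹-norm of a vector in ℝⁿ. -/
noncomputable def l1 {n : ℕ} (x : Fin n → ℝ) : ℝ := ∑ i, |x i|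

/-- The ℓ²-norm of a vector in ℝⁿ. -/
noncomputable def l2 {n : ℕ} (x : Fin n → ℝ) : ℝ := Real.sqrt (∑ i, (x i) ^ 2)

/-- The ℓᵖ-norm of a vector in ℝⁿ. -/
noncomputable def lpNorm {n : ℕ} (p : ℝ) (x : Fin n → ℝ) : ℝ := (∑ i, |x i| ^ p) ^ (1 / p)

/-- A vector is `k`-sparse if it has at most `k` nonzero components. -/
def IsSparse {n : ℕ} (k : ℕ) (x : Fin n → ℝ) : Prop :=
  (Finset.univ.filter (fun i => x i ≠ 0)).card ≤ k

/-- The `k`-sparsity index of `x` with respect to the ℓ¹-norm. -/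
noncomputable def sigma1 {n : ℕ} (k : ℕ) (x : Fin n → ℝ) : ℝ :=
  sInf ((fun z => l1 (x - z)) '' {z | IsSparse k z})

/-- The `k`-sparsity index of `x` with respect to the ℓ²-norm. -/
noncomputable def sigma2 {n : ℕ} (k : ℕ) (x : Fin n → ℝ) : ℝ :=
  sInf ((fun z => l2 (x - z)) '' {z | IsSparse k z})

/-- The vector agreeing with `x` on `S` and zero elsewhere. -/
def proj {n : ℕ} (S : Finset (Fin n)) (x : Fin n → ℝ) : Fin n → ℝ :=
  fun i => if i ∈ S then x i else 0

/-- `G` is a partition of `{1,…,n}` into `g` disjoint nonempty subsets. -/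
def IsPartition {n g : ℕ} (G : Fin g → Finset (Fin n)) : Prop :=
  (∀ i, (G i).Nonempty) ∧ (∀ i j, i ≠ j → Disjoint (G i) (G j)) ∧
    (∀ x : Fin n, ∃ i, x ∈ G i)

/-- The Sparse Group LASSO norm associated to the partition `G` with parameter `μ`. -/
noncomputable def sglNorm {n g : ℕ} (G : Fin g → Finset (Fin n)) (μ : ℝ) (z : Fin n → ℝ) : ℝ :=
  ∑ i, ((1 - μ) * l1 (proj (G i) z) + μ * l2 (proj (G i) z))

/-- `A` satisfies the Restricted Isometry Property of order `k` with constant `δ`. -/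
def RIP {m n : ℕ} (A : Matrix (Fin m) (Fin n) ℝ) (k : ℕ) (δ : ℝ) : Prop :=
  ∀ u : Fin n → ℝ, IsSparse k u →
    (1 - δ) * (l2 u) ^ 2 ≤ (l2 (A.mulVec u)) ^ 2 ∧
      (l2 (A.mulVec u)) ^ 2 ≤ (1 + δ) * (l2 u) ^ 2

/-- `A` satisfies the ℓ₂ robust null space property of order `k` with constants `ρ`, `τ`. -/
def RNSP {m n : ℕ} (A : Matrix (Fin m) (Fin n) ℝ) (k : ℕ) (ρ τ : ℝ) : Prop :=
  ∀ h : Fin n → ℝ, ∀ S : Finset (Fin n), S.card ≤ k →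
    l2 (proj S h) ≤ (ρ / Real.sqrt k) * l1 (proj Sᶜ h) +
      (τ / Real.sqrt k) * l2 (A.mulVec h)

/-!
Translating by `-h` changes the ℓ¹ part of the elastic net by at most a constant depending on `h`,
whereas at `t • x` it changes the quadratic part by a multiple of `t * ⟪x, h⟫`, up to a constant.
If no `t • x` is improved by the translation, then `⟪x, h⟫ = 0`. Multiples of the standard basis
vectors are sparse, so every `h` in the null space is orthogonal to all of them: it vanishes.
-/

section InnerProduct

theorem eq_zero_of_forall_mul_le {𝕜 : Type*} [Field 𝕜] [LinearOrder 𝕜] [IsStrictOrderedRing 𝕜]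
    {a b : 𝕜} (h : ∀ t, t * a ≤ b) : a = 0 := by
  by_contra ha
  have hb : b + 1 ≤ b := by simpa only [div_mul_cancel₀ _ ha] using h ((b + 1) / a)
  exact (lt_add_one b).not_ge hb

theorem inner_eq_zero_of_forall_add_mul_norm_sq_le_sub {E : Type*} [NormedAddCommGroup E]
    [InnerProductSpace ℝ E] {f : E → ℝ} {c C : ℝ} {x h : E} (hc : 0 < c)
    (hf : ∀ t : ℝ, f (t • x - h) ≤ f (t • x) + C)
    (hmin : ∀ t : ℝ, f (t • x) + c * ‖t • x‖ ^ 2 ≤ f (t • x - h) + c * ‖t • x - h‖ ^ 2) :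
    inner ℝ x h = 0 := by
  have hbound (t : ℝ) : t * (2 * c * inner ℝ x h) ≤ C + c * ‖h‖ ^ 2 := by
    have hexpand : ‖t • x - h‖ ^ 2 = ‖t • x‖ ^ 2 - 2 * (t * inner ℝ x h) + ‖h‖ ^ 2 := by
      rw [norm_sub_sq_real, real_inner_smul_left]
    have hmin_t := hmin t
    rw [hexpand] at hmin_t
    linarith [hf t]
  exact (mul_eq_zero_iff_left (by positivity)).mp (eq_zero_of_forall_mul_le hbound)

end InnerProduct

section ElasticNet

variable {n : ℕ}

theorem l1_eq_norm (x : Fin n → ℝ) : l1 x = ‖WithLp.toLp 1 x‖ := by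
  simp [l1, PiLp.norm_eq_of_L1]

theorem l2_eq_norm (x : Fin n → ℝ) : l2 x = ‖WithLp.toLp 2 x‖ := by
  simp [l2, EuclideanSpace.norm_eq]

theorem abs_l1_sub_sub_l1_le (x h : Fin n → ℝ) : |l1 (x - h) - l1 x| ≤ l1 h := by
  simpa [l1_eq_norm] using abs_norm_sub_norm_le (WithLp.toLp 1 (x - h)) (WithLp.toLp 1 x)

theorem sigma2_nonneg (k : ℕ) (x : Fin n → ℝ) : 0 ≤ sigma2 k x := by
  apply Real.sInf_nonneg
  rintro _ ⟨z, -, rfl⟩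
  exact Real.sqrt_nonneg _

theorem isSparse_one_single (i : Fin n) (t : ℝ) : IsSparse 1 (Pi.single i t) := by
  have hsupport : Finset.univ.filter (fun j => (Pi.single i t : Fin n → ℝ) j ≠ 0) ⊆ {i} := by
    intro j hj
    by_contra hji
    simp_all
  exact Finset.card_le_card hsupport

/-- The elastic net regularizer `μ‖x‖₁ + (1 - μ)‖x‖₂²`. -/
noncomputable def elasticNet (μ : ℝ) (x : Fin n → ℝ) : ℝ := μ * l1 x + (1 - μ) * l2 x ^ 2

theorem eq_zero_of_forall_elasticNet_le_sub {μ : ℝ} (hμ : μ < 1) {h : Fin n → ℝ}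
    (hmin : ∀ x, IsSparse 1 x → elasticNet μ x ≤ elasticNet μ (x - h)) : h = 0 := by
  have hl1 (x : Fin n → ℝ) : μ * l1 (x - h) ≤ μ * l1 x + |μ| * l1 h := by
    rw [← sub_le_iff_le_add', ← mul_sub]
    calc μ * (l1 (x - h) - l1 x)
      _ ≤ |μ| * |l1 (x - h) - l1 x| := (le_abs_self _).trans_eq (abs_mul _ _)
      _ ≤ |μ| * l1 h := by gcongr; exact abs_l1_sub_sub_l1_le x h
  ext i
  have horthogonal : inner ℝ (EuclideanSpace.single i (1 : ℝ)) (WithLp.toLp 2 h) = 0 := by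
    refine inner_eq_zero_of_forall_add_mul_norm_sq_le_sub (f := fun y => μ * l1 y.ofLp)
      (sub_pos.mpr hμ) (fun t => hl1 _) fun t => ?_
    have hsparse : IsSparse 1 (t • Pi.single i 1 : Fin n → ℝ) := by
      simpa [← Pi.single_smul] using isSparse_one_single i t
    have hmin_t := hmin _ hsparse
    simp only [elasticNet, l2_eq_norm] at hmin_t
    exact hmin_t
  simpa [EuclideanSpace.inner_single_left] using horthogonal

end ElasticNet

theorem stmt2_general {n : ℕ} {F : Type*} [AddCommGroup F] [Module ℝ F]
    (A : (Fin n → ℝ) →ₗ[ℝ] F) {μ : ℝ} (hμ : μ < 1)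
    (hmin : ∀ x, IsSparse 1 x → ∀ z, A z = A x → elasticNet μ x ≤ elasticNet μ z) :
    Function.Injective A := by
  refine (injective_iff_map_eq_zero A).mpr fun h hh => ?_
  exact eq_zero_of_forall_elasticNet_le_sub hμ fun x hx => hmin x hx (x - h) (by simp [hh])

/-- If every `k`-sparse vector minimizes the Elastic Net regularizer over its
own fiber of `A`, then every `h` in the null space of `A` satisfies `‖h‖₂ ≤ 2·σ_k(h,‖·‖₂)`. -/
theorem stmt2 (m n k : ℕ) (hm : 0 < m) (hn : 0 < n) (hk : 0 < k)
    (A : Matrix (Fin m) (Fin n) ℝ) (μ : ℝ) (hμ : μ ∈ Set.Ioo (0 : ℝ) 1)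
    (hmin : ∀ x : Fin n → ℝ, IsSparse k x → ∀ z : Fin n → ℝ, A.mulVec z = A.mulVec x →
      μ * l1 x + (1 - μ) * (l2 x) ^ 2 ≤ μ * l1 z + (1 - μ) * (l2 z) ^ 2) :
    ∀ h : Fin n → ℝ, A.mulVec h = 0 → l2 h ≤ 2 * sigma2 k h := by
  intro h hh
  obtain rfl : h = 0 := (injective_iff_map_eq_zero A.mulVecLin).mp
    (stmt2_general A.mulVecLin hμ.2 fun x hx => hmin x (hx.trans hk)) h hh
  simpa [l2] using sigma2_nonneg k 0
end

section
/- Let y ∈ ℝᵐ and A ∈ ℝ^{m×n}, where each column a_j of A satisfies ‖a_j‖₂ = 1. Let μ ∈ (0,1], let 𝒢 = {G₁,…,G_g} be a partition of {1,…,n} into g disjoint nonempty subsets, and let λ > 0. Let x̂ be a minimizer over z ∈ ℝⁿ of λ‖y − Az‖₂² + ‖z‖_{SGL,μ}. Suppose indices i and j belong to the same group G_s and that x̂_i·x̂_j > 0. Then |x̂_i − x̂_j| ≤ (2λ/μ)·√(2(1 − a_iᵀa_j))·‖y‖₂·‖x̂_{G_s}‖₂, where x̂_{G_s} denotes the restriction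 of x̂ to the coordinates in G_s. -/
/-!
The objective is differentiable at a minimizer `x` along any direction `d` supported on the
support of `x`, so its derivative vanishes there. Along `d = eᵢ - eⱼ` the `ℓ¹` parts contribute
`sign xᵢ - sign xⱼ = 0` and each `ℓ²` part containing `i` and `j` contributes
`(xᵢ - xⱼ) / ‖x_G‖₂`. Hence `xᵢ - xⱼ` is controlled by the correlation of the residual with
`aᵢ - aⱼ`, which Cauchy–Schwarz bounds since the residual is no longer than `y`.
-/

theorem sign_eq_sign_of_mul_pos {R : Type*} [Ring R] [LinearOrder R] [IsStrictOrderedRing R]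
    {a b : R} (hab : 0 < a * b) : SignType.sign a = SignType.sign b := by
  rcases pos_and_pos_or_neg_and_neg_of_mul_pos hab with ⟨ha, hb⟩ | ⟨ha, hb⟩
  · rw [sign_pos ha, sign_pos hb]
  · rw [sign_neg ha, sign_neg hb]

theorem support_single_sub_single_subset {ι R : Type*} [DecidableEq ι] [AddGroup R] {x : ι → R}
    {i j : ι} (hi : x i ≠ 0) (hj : x j ≠ 0) (a b : R) :
    (Pi.single i a - Pi.single j b : ι → R).support ⊆ x.support := by
  intro k hk
  by_contra hxk
  have hki : k ≠ i := by rintro rfl; exact hxk hi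
  have hkj : k ≠ j := by rintro rfl; exact hxk hj
  simp [hki, hkj] at hk

section EuclideanNorm

variable {n : ℕ} {u v : Fin n → ℝ}

theorem l2_nonneg (x : Fin n → ℝ) : 0 ≤ l2 x := Real.sqrt_nonneg _

theorem l2_sq (x : Fin n → ℝ) : l2 x ^ 2 = ∑ k, x k ^ 2 :=
  Real.sq_sqrt (Finset.sum_nonneg fun _ _ => sq_nonneg _)

theorem l2_zero : l2 (0 : Fin n → ℝ) = 0 := by
  simp [l2]

theorem l2_eq_zero_iff {x : Fin n → ℝ} : l2 x = 0 ↔ x = 0 := by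
  rw [← sq_eq_zero_iff, l2_sq, Finset.sum_eq_zero_iff_of_nonneg fun _ _ => sq_nonneg _]
  simp [funext_iff]

theorem l2_pos_of_ne_zero {x : Fin n → ℝ} (hx : x ≠ 0) : 0 < l2 x :=
  (l2_nonneg x).lt_of_ne' (l2_eq_zero_iff.not.mpr hx)

theorem abs_dotProduct_le_l2_mul_l2 (u v : Fin n → ℝ) : |u ⬝ᵥ v| ≤ l2 u * l2 v := by
  refine abs_le_of_sq_le_sq ?_ (mul_nonneg (l2_nonneg u) (l2_nonneg v))
  rw [mul_pow, l2_sq, l2_sq]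
  exact Finset.sum_mul_sq_le_sq_mul_sq _ u v

theorem l2_sub_sq (u v : Fin n → ℝ) : l2 (u - v) ^ 2 = l2 u ^ 2 + l2 v ^ 2 - 2 * (u ⬝ᵥ v) := by
  simp only [l2_sq, dotProduct, Finset.mul_sum, ← Finset.sum_add_distrib,
    ← Finset.sum_sub_distrib, Pi.sub_apply]
  exact Finset.sum_congr rfl fun _ _ => by ring

theorem l2_sub_of_l2_eq_one (hu : l2 u = 1) (hv : l2 v = 1) :
    l2 (u - v) = √(2 * (1 - u ⬝ᵥ v)) := by
  rw [← Real.sqrt_sq (l2_nonneg (u - v)), l2_sub_sq, hu, hv]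
  ring_nf

end EuclideanNorm

section DirectionalDerivatives

variable {n : ℕ}

theorem hasDerivAt_l2_sq_add_smul (x d : Fin n → ℝ) :
    HasDerivAt (fun t : ℝ => l2 (x + t • d) ^ 2) (2 * (x ⬝ᵥ d)) 0 := by
  have hterm (k : Fin n) : HasDerivAt (fun t : ℝ => (x k + t * d k) ^ 2) (2 * (x k * d k)) 0 := by
    simpa [mul_assoc] using (((hasDerivAt_id (0 : ℝ)).mul_const (d k)).const_add (x k)).fun_pow 2
  simpa only [l2_sq, Pi.add_apply, Pi.smul_apply, smul_eq_mul, dotProduct, Finset.mul_sum]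
    using HasDerivAt.fun_sum fun k _ => hterm k

-- At `x = 0` the support condition forces `d = 0`, and the quotient is the junk value `0 / 0 = 0`,
-- which is the correct derivative.
theorem hasDerivAt_l2_add_smul {x d : Fin n → ℝ} (hd : d.support ⊆ x.support) :
    HasDerivAt (fun t : ℝ => l2 (x + t • d)) (x ⬝ᵥ d / l2 x) 0 := by
  rcases eq_or_ne x 0 with rfl | hx
  · obtain rfl : d = 0 := by simpa using hd
    simpa [l2_zero] using hasDerivAt_const (0 : ℝ) (0 : ℝ)
  · have hsq : l2 (x + (0 : ℝ) • d) ^ 2 ≠ 0 := by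
      simpa [l2_eq_zero_iff] using hx
    convert (hasDerivAt_l2_sq_add_smul x d).sqrt hsq using 1
    · simp only [Real.sqrt_sq (l2_nonneg _)]
    · rw [zero_smul, add_zero, Real.sqrt_sq (l2_nonneg x), mul_div_mul_left _ _ two_ne_zero]

theorem hasDerivAt_l1_add_smul {x d : Fin n → ℝ} (hd : d.support ⊆ x.support) :
    HasDerivAt (fun t : ℝ => l1 (x + t • d)) (∑ k, SignType.sign (x k) * d k) 0 := by
  refine HasDerivAt.fun_sum fun k _ => ?_
  by_cases hdk : d k = 0
  · simpa [hdk] using hasDerivAt_const (0 : ℝ) |x k|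
  · have hline : HasDerivAt (fun t : ℝ => x k + t * d k) (d k) 0 := by
      simpa using ((hasDerivAt_id (0 : ℝ)).mul_const (d k)).const_add (x k)
    have habs : HasDerivAt (|·|) (SignType.sign (x k) : ℝ) (x k + 0 * d k) := by
      simpa using hasDerivAt_abs (hd hdk)
    exact habs.comp 0 hline

end DirectionalDerivatives

section CoordinateProjection

variable {n : ℕ} {S : Finset (Fin n)} {i j : Fin n}

theorem proj_zero (S : Finset (Fin n)) : proj S 0 = 0 := by
  ext; simp [proj]

theorem proj_add_smul (S : Finset (Fin n)) (x d : Fin n → ℝ) (t : ℝ) :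
    proj S (x + t • d) = proj S x + t • proj S d := by
  ext k
  by_cases hk : k ∈ S <;> simp [proj, hk]

theorem proj_apply_of_mem (hi : i ∈ S) (x : Fin n → ℝ) : proj S x i = x i :=
  if_pos hi

theorem support_proj_subset_support_proj (S : Finset (Fin n)) {x d : Fin n → ℝ}
    (hd : d.support ⊆ x.support) : (proj S d).support ⊆ (proj S x).support := by
  intro k hk
  by_cases hkS : k ∈ S
  · simpa [proj, hkS] using hd (by simpa [proj, hkS] using hk)
  · simp [proj, hkS] at hk

theorem proj_sub (S : Finset (Fin n)) (u v : Fin n → ℝ) :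
    proj S (u - v) = proj S u - proj S v := by
  ext k
  by_cases hk : k ∈ S <;> simp [proj, hk]

theorem proj_single (S : Finset (Fin n)) (i : Fin n) (c : ℝ) :
    proj S (Pi.single i c) = if i ∈ S then Pi.single i c else 0 := by
  ext k
  rcases eq_or_ne k i with rfl | hki
  · by_cases hk : k ∈ S <;> simp [proj, hk]
  · by_cases hi : i ∈ S <;> simp [proj, hi, hki]

theorem proj_single_sub_single (hij : i ∈ S ↔ j ∈ S) :
    proj S (Pi.single i 1 - Pi.single j 1) =
      if i ∈ S then Pi.single i 1 - Pi.single j 1 else 0 := by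
  by_cases hi : i ∈ S
  · simp only [proj_sub, proj_single, hi, hij.mp hi, if_true]
  · simp only [proj_sub, proj_single, hi, hij.not.mp hi, if_false, sub_zero]

end CoordinateProjection

section SparseGroupLasso

variable {m n g : ℕ}

/-- The Sparse Group LASSO objective `λ‖y - Az‖₂² + ‖z‖_{SGL,μ}`. -/
noncomputable def sglObjective (y : Fin m → ℝ) (A : Matrix (Fin m) (Fin n) ℝ)
    (G : Fin g → Finset (Fin n)) (μ lam : ℝ) (z : Fin n → ℝ) : ℝ :=
  lam * l2 (y - A.mulVec z) ^ 2 + sglNorm G μ z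

variable {y : Fin m → ℝ} {A : Matrix (Fin m) (Fin n) ℝ} {G : Fin g → Finset (Fin n)}
  {μ lam : ℝ} {x d : Fin n → ℝ} {i j : Fin n}

theorem sglNorm_zero (G : Fin g → Finset (Fin n)) (μ : ℝ) : sglNorm G μ 0 = 0 := by
  simp [sglNorm, proj_zero, l2_zero, l1]

theorem sglNorm_nonneg (G : Fin g → Finset (Fin n)) (hμ : μ ∈ Set.Icc (0 : ℝ) 1)
    (x : Fin n → ℝ) : 0 ≤ sglNorm G μ x :=
  Finset.sum_nonneg fun _ _ => add_nonneg
    (mul_nonneg (sub_nonneg.mpr hμ.2) (Finset.sum_nonneg fun _ _ => abs_nonneg _))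
    (mul_nonneg hμ.1 (l2_nonneg _))

theorem l2_residual_le_of_sglObjective_le_zero (hμ : μ ∈ Set.Icc (0 : ℝ) 1) (hlam : 0 < lam)
    (hx : sglObjective y A G μ lam x ≤ sglObjective y A G μ lam 0) :
    l2 (y - A.mulVec x) ≤ l2 y := by
  simp only [sglObjective, sglNorm_zero, Matrix.mulVec_zero, sub_zero, add_zero] at hx
  have hsq : l2 (y - A.mulVec x) ^ 2 ≤ l2 y ^ 2 :=
    le_of_mul_le_mul_left (by linarith [sglNorm_nonneg G hμ x]) hlam
  exact le_of_sq_le_sq hsq (l2_nonneg y)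

theorem hasDerivAt_sglNorm_add_smul (G : Fin g → Finset (Fin n)) (μ : ℝ)
    (hd : d.support ⊆ x.support) :
    HasDerivAt (fun t : ℝ => sglNorm G μ (x + t • d))
      (∑ k, ((1 - μ) * ∑ l, SignType.sign (proj (G k) x l) * proj (G k) d l +
        μ * (proj (G k) x ⬝ᵥ proj (G k) d / l2 (proj (G k) x)))) 0 := by
  simp only [sglNorm, proj_add_smul]
  refine HasDerivAt.fun_sum fun k _ => ?_
  have hdk := support_proj_subset_support_proj (G k) hd
  exact ((hasDerivAt_l1_add_smul hdk).const_mul _).add ((hasDerivAt_l2_add_smul hdk).const_mul _)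

theorem hasDerivAt_l2_residual_sq_add_smul (y : Fin m → ℝ) (A : Matrix (Fin m) (Fin n) ℝ)
    (x d : Fin n → ℝ) :
    HasDerivAt (fun t : ℝ => l2 (y - A.mulVec (x + t • d)) ^ 2)
      (-2 * ((y - A.mulVec x) ⬝ᵥ A.mulVec d)) 0 := by
  convert hasDerivAt_l2_sq_add_smul (y - A.mulVec x) (-A.mulVec d) using 1
  · ext t
    rw [Matrix.mulVec_add, Matrix.mulVec_smul, smul_neg, ← sub_eq_add_neg, sub_sub]
  · rw [dotProduct_neg]
    ring

theorem sglObjective_stationary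
    (hmin : ∀ z, sglObjective y A G μ lam x ≤ sglObjective y A G μ lam z)
    (hd : d.support ⊆ x.support) :
    2 * lam * ((y - A.mulVec x) ⬝ᵥ A.mulVec d) =
      ∑ k, ((1 - μ) * ∑ l, SignType.sign (proj (G k) x l) * proj (G k) d l +
        μ * (proj (G k) x ⬝ᵥ proj (G k) d / l2 (proj (G k) x))) := by
  have hderiv := ((hasDerivAt_l2_residual_sq_add_smul y A x d).const_mul lam).add
    (hasDerivAt_sglNorm_add_smul G μ hd)
  have hlocal : IsLocalMin (fun t : ℝ => sglObjective y A G μ lam (x + t • d)) 0 :=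
    Filter.Eventually.of_forall fun t => by simpa using hmin (x + t • d)
  linarith [hlocal.hasDerivAt_eq_zero hderiv]

theorem residual_dotProduct_col_sub_col
    (hmin : ∀ z, sglObjective y A G μ lam x ≤ sglObjective y A G μ lam z)
    (hG : ∀ k, i ∈ G k ↔ j ∈ G k) (hij : 0 < x i * x j) :
    2 * lam * ((y - A.mulVec x) ⬝ᵥ (A.col i - A.col j)) =
      μ * (x i - x j) * ∑ k with i ∈ G k, (l2 (proj (G k) x))⁻¹ := by
  have hd := support_single_sub_single_subset (left_ne_zero_of_mul hij.ne')
    (right_ne_zero_of_mul hij.ne') 1 1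
  have hstat := sglObjective_stationary hmin hd
  rw [Matrix.mulVec_sub, Matrix.mulVec_single_one, Matrix.mulVec_single_one] at hstat
  rw [hstat, Finset.sum_filter, Finset.mul_sum]
  refine Finset.sum_congr rfl fun k _ => ?_
  rw [proj_single_sub_single (hG k)]
  split_ifs with hi
  · have hsign : ∑ l, (SignType.sign (proj (G k) x l) : ℝ) *
        (Pi.single i 1 - Pi.single j 1 : Fin n → ℝ) l = 0 := by
      simp [mul_sub, Pi.single_apply, proj_apply_of_mem hi, proj_apply_of_mem ((hG k).mp hi),
        sign_eq_sign_of_mul_pos hij]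
    rw [hsign, dotProduct_sub, dotProduct_single_one, dotProduct_single_one,
      proj_apply_of_mem hi, proj_apply_of_mem ((hG k).mp hi)]
    ring
  · simp

theorem mul_abs_sub_mul_sum_inv_l2_proj_le (hμ : μ ∈ Set.Icc (0 : ℝ) 1) (hlam : 0 < lam)
    (hmin : ∀ z, sglObjective y A G μ lam x ≤ sglObjective y A G μ lam z)
    (hG : ∀ k, i ∈ G k ↔ j ∈ G k) (hij : 0 < x i * x j) :
    μ * |x i - x j| * ∑ k with i ∈ G k, (l2 (proj (G k) x))⁻¹ ≤
      2 * lam * (l2 y * l2 (A.col i - A.col j)) := by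
  have hweight : 0 ≤ ∑ k with i ∈ G k, (l2 (proj (G k) x))⁻¹ :=
    Finset.sum_nonneg fun _ _ => inv_nonneg.mpr (l2_nonneg _)
  have hresidual : l2 (y - A.mulVec x) ≤ l2 y :=
    l2_residual_le_of_sglObjective_le_zero hμ hlam (hmin 0)
  calc μ * |x i - x j| * ∑ k with i ∈ G k, (l2 (proj (G k) x))⁻¹
      = |μ * (x i - x j) * ∑ k with i ∈ G k, (l2 (proj (G k) x))⁻¹| := by
        rw [abs_mul, abs_mul, abs_of_nonneg hμ.1, abs_of_nonneg hweight]
    _ = 2 * lam * |(y - A.mulVec x) ⬝ᵥ (A.col i - A.col j)| := by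
        rw [← residual_dotProduct_col_sub_col hmin hG hij, abs_mul, abs_of_pos (by positivity)]
    _ ≤ 2 * lam * (l2 (y - A.mulVec x) * l2 (A.col i - A.col j)) := by
        gcongr
        exact abs_dotProduct_le_l2_mul_l2 _ _
    _ ≤ 2 * lam * (l2 y * l2 (A.col i - A.col j)) := by
        gcongr
        exact l2_nonneg _

theorem stmt3_general (hμ : μ ∈ Set.Ioc (0 : ℝ) 1) (hlam : 0 < lam)
    (hmin : ∀ z, sglObjective y A G μ lam x ≤ sglObjective y A G μ lam z)
    (hG : ∀ k, i ∈ G k ↔ j ∈ G k) {s : Fin g} (hi : i ∈ G s) (hij : 0 < x i * x j) :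
    |x i - x j| ≤ 2 * lam / μ * l2 (A.col i - A.col j) * l2 y * l2 (proj (G s) x) := by
  have hμ_pos : 0 < μ := hμ.1
  have hgroup_pos : 0 < l2 (proj (G s) x) := by
    refine l2_pos_of_ne_zero fun h => left_ne_zero_of_mul hij.ne' ?_
    rw [← proj_apply_of_mem hi x, h, Pi.zero_apply]
  have hweight : (l2 (proj (G s) x))⁻¹ ≤ ∑ k with i ∈ G k, (l2 (proj (G k) x))⁻¹ :=
    Finset.single_le_sum (f := fun k => (l2 (proj (G k) x))⁻¹)
      (fun k _ => inv_nonneg.mpr (l2_nonneg _)) (by simpa using hi)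
  have hscaled : μ * |x i - x j| / l2 (proj (G s) x) ≤
      2 * lam * (l2 y * l2 (A.col i - A.col j)) := by
    rw [div_eq_mul_inv]
    exact (mul_le_mul_of_nonneg_left hweight (by positivity)).trans
      (mul_abs_sub_mul_sum_inv_l2_proj_le (Set.Ioc_subset_Icc_self hμ) hlam hmin hG hij)
  rw [div_le_iff₀ hgroup_pos] at hscaled
  calc |x i - x j|
      ≤ 2 * lam * (l2 y * l2 (A.col i - A.col j)) * l2 (proj (G s) x) / μ :=
        (le_div_iff₀' hμ_pos).mpr hscaled
    _ = 2 * lam / μ * l2 (A.col i - A.col j) * l2 y * l2 (proj (G s) x) := by ring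

theorem mem_iff_mem_of_isPartition (hG : IsPartition G) {s : Fin g} (hi : i ∈ G s)
    (hj : j ∈ G s) (k : Fin g) : i ∈ G k ↔ j ∈ G k := by
  rcases eq_or_ne s k with rfl | hsk
  · exact iff_of_true hi hj
  · have hdisj := Finset.disjoint_left.mp (hG.2.1 s k hsk)
    exact iff_of_false (hdisj hi) (hdisj hj)

end SparseGroupLasso

/-- Grouping effect for the Sparse Group LASSO. -/
theorem stmt3 (m n g : ℕ) (y : Fin m → ℝ) (A : Matrix (Fin m) (Fin n) ℝ)
    (hcols : ∀ j : Fin n, l2 (fun i => A i j) = 1)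
    (μ : ℝ) (hμ : μ ∈ Set.Ioc (0 : ℝ) 1)
    (G : Fin g → Finset (Fin n)) (hG : IsPartition G)
    (lam : ℝ) (hlam : 0 < lam)
    (xh : Fin n → ℝ)
    (hmin : ∀ z : Fin n → ℝ,
      lam * (l2 (y - A.mulVec xh)) ^ 2 + sglNorm G μ xh ≤
        lam * (l2 (y - A.mulVec z)) ^ 2 + sglNorm G μ z)
    (i j : Fin n) (s : Fin g) (hi : i ∈ G s) (hj : j ∈ G s)
    (hprod : 0 < xh i * xh j) :
    |xh i - xh j| ≤ (2 * lam / μ) * Real.sqrt (2 * (1 - ∑ r, A r i * A r j)) *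
      l2 y * l2 (proj (G s) xh) := by
  have hdist : l2 (A.col i - A.col j) = √(2 * (1 - ∑ r, A r i * A r j)) :=
    l2_sub_of_l2_eq_one (hcols i) (hcols j)
  rw [← hdist]
  exact stmt3_general hμ hlam hmin (mem_iff_mem_of_isPartition hG hi hj) hi hprod
end
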